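/- Let η_1 ≥ η_2 ≥ … ≥ η_{T+1} > 0, let v_1, …, v_T ∈ R^X, and define y_1 = 0 ∈ R^X, y_{t+1} = y_t − v_t, and x_t = (P_x(η_t y_t))_{x∈X} for t = 1, …, T. Then for every q ∈ Δ(X): ∑_{t=1}^T ∑_{x∈X} v_{t,x}(x_{t,x} − q_x) ≤ H/η_{T+1} + ∑_{t=1}^T (1/η_t)·F(x_t, η_t y_{t+1}), where H denotes the root class score of the zero vector. -/

import Mathlib

/-!
Write `Φ(y)` for the root score of `y`, `r_l(x)` for the conditional choice probability of the
level-`(l+1)` class of `x` inside its level-`l` class, and `q_l(x)` for the `q`-mass of the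
level-`l` class of `x`.

Summation by parts turns the Fenchel coupling of a probability vector `q` with `y` into
`∑ l < L, μ^(l+1) * ∑ x, q_x (log q_{l+1}(x) - log q_l(x) - log r_l(x))` (`fench_eq`), a weighted sum
of conditional relative entropies.  Gibbs' inequality at each level makes it nonnegative
(`fench_nonneg`), and it vanishes when `q` is the nested choice probability of `y`, because then
`q_l(x)` is the product of the `r_{l'}(x)`, `l' < l` (`fench_condProb`).  So `Φ` is the convex
conjugate of the entropy `h` on the simplex, and the choice probabilities attain the maximum.

As `-H ≤ h ≤ 0` on the simplex, this yields `⟨y, q⟩ ≤ Φ(y)` and shows that `(Φ(s y) - H) / s`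
is nondecreasing in `s > 0` (`score_div_mono`).  Moreover
`F(x_t, η_t y_{t+1}) / η_t = ⟨v_t, x_t⟩ + (Φ(η_t y_{t+1}) - Φ(η_t y_t)) / η_t`.  Replacing `η_t` by
`η_{t+1}` in the first `Φ` term by means of this monotonicity makes the sum over `t` telescope, and
`⟨y_{T+1}, q⟩ ≤ Φ(η_{T+1} y_{T+1}) / η_{T+1}` finishes the argument.
-/

noncomputable section

namespace NestedBandits

/-- A similarity structure of depth `L ≥ 1` on a finite set `X`, encoded by the map
`cls l x` = the similarity class of level `l` containing `x`. -/
structure SimStruct (X : Type*) [Fintype X] [DecidableEq X] where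
  L : ℕ
  one_le_L : 1 ≤ L
  cls : ℕ → X → Finset X
  mem_cls : ∀ l x, x ∈ cls l x
  cls_zero : ∀ x, cls 0 x = Finset.univ
  cls_L : ∀ x, cls L x = {x}
  cls_congr : ∀ l x z, z ∈ cls l x → cls l z = cls l x
  cls_refines : ∀ l x, l < L → cls (l + 1) x ⊆ cls l x

variable {X : Type*} [Fintype X] [DecidableEq X]

/-- The probability `p_C` of a class `C`. -/
def pC (p : X → ℝ) (C : Finset X) : ℝ := ∑ x ∈ C, p x

/-- The simplex `Δ(X)` of probability vectors on `X`. -/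
def simplex (X : Type*) [Fintype X] : Set (X → ℝ) :=
  {p | (∀ x, 0 ≤ p x) ∧ ∑ x, p x = 1}

/-- `t * log t`, with the convention `0 * log 0 = 0` (automatic since `Real.log 0 = 0`). -/
def xlogx (t : ℝ) : ℝ := t * Real.log t

/-- Auxiliary class score: `k` is the number of levels below the class (so the class has
level `S.L - k`). -/
def scoreAux (S : SimStruct X) (μ : ℕ → ℝ) (y : X → ℝ) : ℕ → Finset X → ℝ
  | 0, C => ∑ x ∈ C, y x
  | k + 1, C =>
      μ (S.L - k) *
        Real.log (∑ C' ∈ C.image (S.cls (S.L - k)), Real.exp (scoreAux S μ y k C' / μ (S.L - k)))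

/-- The class score `y_C` of a class `C` of level `l`. -/
def score (S : SimStruct X) (μ : ℕ → ℝ) (y : X → ℝ) (l : ℕ) (C : Finset X) : ℝ :=
  scoreAux S μ y (S.L - l) C

/-- The nested choice probability `P_{x | C}(y)` where `C = S.cls l x` is the level-`l`
class of `x`: the product of the conditional choice probabilities along the chain of
classes from `C` down to `{x}`. -/
def condProb (S : SimStruct X) (μ : ℕ → ℝ) (y : X → ℝ) (l : ℕ) (x : X) : ℝ :=
  ∏ l' ∈ Finset.Ico l S.L,
    Real.exp ((score S μ y (l' + 1) (S.cls (l' + 1) x) - score S μ y l' (S.cls l' x)) / μ (l' + 1))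

/-- The nested entropy `h_C(p)` of a class `C` of level `l`. -/
def nestEnt (S : SimStruct X) (μ : ℕ → ℝ) (p : X → ℝ) (l : ℕ) (C : Finset X) : ℝ :=
  ∑ l' ∈ Finset.Icc (max l 1) S.L,
    (μ l' - μ (l' + 1)) * ∑ C' ∈ C.image (S.cls l'), xlogx (pC p C')

/-- The conditional entropy `h(p | C)` of a class `C` of level `l`. -/
def condEnt (S : SimStruct X) (μ : ℕ → ℝ) (p : X → ℝ) (l : ℕ) (C : Finset X) : ℝ :=
  if l < S.L then
    μ (l + 1) * ∑ C' ∈ C.image (S.cls (l + 1)), pC p C' * (Real.log (pC p C') - Real.log (pC p C))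
  else 0

/-- Auxiliary nested power sum: `k = S.L - l ≥ 1` levels below the class. -/
def npsAux (S : SimStruct X) (μ : ℕ → ℝ) (y c : X → ℝ) : ℕ → Finset X → ℝ
  | 0, _ => 0
  | 1, C => ∑ x ∈ C, condProb S μ y (S.L - 1) x * Real.exp (-c x / μ S.L)
  | k + 2, C =>
      ∑ C' ∈ C.image (S.cls (S.L - (k + 1))),
        Real.exp ((score S μ y (S.L - (k + 1)) C' - score S μ y (S.L - (k + 2)) C) /
            μ (S.L - (k + 1))) *
          npsAux S μ y c (k + 1) C' ^ (μ (S.L - k) / μ (S.L - (k + 1)))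

/-- The nested power sum `σ_{c,y}(C)` for a class `C` of level `l < S.L`. -/
def nps (S : SimStruct X) (μ : ℕ → ℝ) (y c : X → ℝ) (l : ℕ) (C : Finset X) : ℝ :=
  npsAux S μ y c (S.L - l) C

/-- The Fenchel coupling `F(p, y) = h(p) + y_X - ⟨y, p⟩`. -/
def fench (S : SimStruct X) (μ : ℕ → ℝ) (p y : X → ℝ) : ℝ :=
  nestEnt S μ p 0 Finset.univ + score S μ y 0 Finset.univ - ∑ x, y x * p x

/-- The effective number of alternatives `N_eff = (∑_l √(N^l) R̄_l)²`. -/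
def Neff (S : SimStruct X) (R : ℕ → Finset X → ℝ) : ℝ :=
  (∑ l ∈ Finset.Icc 1 S.L,
      Real.sqrt ((Finset.univ.image (S.cls l)).card) *
        Real.sqrt ((∑ C ∈ Finset.univ.image (S.cls l), R l C ^ 2) /
          ((Finset.univ.image (S.cls l)).card))) ^ 2

/-! ### Classes and sums over classes -/

lemma mem_cls_mono (S : SimStruct X) {l m : ℕ} (hlm : l ≤ m) (hm : m ≤ S.L) {x z : X}
    (h : z ∈ S.cls m x) : z ∈ S.cls l x := by
  induction m, hlm using Nat.le_induction with
  | base => exact h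
  | succ m hlm ih => exact ih (by omega) (S.cls_refines m x (by omega) h)

lemma cls_eq_of_mem (S : SimStruct X) {l m : ℕ} (hlm : l ≤ m) (hm : m ≤ S.L) {x z : X}
    (h : z ∈ S.cls m x) : S.cls l z = S.cls l x :=
  S.cls_congr l x z (mem_cls_mono S hlm hm h)

/-- Grouping a sum over a class `D` of level `l` according to the classes of a finer level `m`. -/
lemma sum_cls_fiber (S : SimStruct X) {l m : ℕ} (hlm : l ≤ m) (hm : m ≤ S.L) (w : X)
    (g : X → ℝ) :
    ∑ x ∈ S.cls l w, g x = ∑ C ∈ (S.cls l w).image (S.cls m), ∑ x ∈ C, g x := by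
  rw [← Finset.sum_fiberwise_of_maps_to (t := (S.cls l w).image (S.cls m)) (g := S.cls m)
    (fun x hx => Finset.mem_image_of_mem _ hx)]
  refine Finset.sum_congr rfl fun C hC => ?_
  obtain ⟨z, hz, rfl⟩ := Finset.mem_image.1 hC
  refine Finset.sum_congr ?_ fun _ _ => rfl
  ext x
  simp only [Finset.mem_filter]
  constructor
  · rintro ⟨-, h⟩
    exact h ▸ S.mem_cls m x
  · intro h
    refine ⟨?_, S.cls_congr m z x h⟩
    have h1 := mem_cls_mono S hlm hm h
    rwa [S.cls_congr l w z hz] at h1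

lemma sum_mul_cls (S : SimStruct X) {l m : ℕ} (hlm : l ≤ m) (hm : m ≤ S.L) (w : X)
    (q : X → ℝ) (G : Finset X → ℝ) :
    ∑ x ∈ S.cls l w, q x * G (S.cls m x) =
      ∑ C ∈ (S.cls l w).image (S.cls m), pC q C * G C := by
  rw [sum_cls_fiber S hlm hm]
  refine Finset.sum_congr rfl fun C hC => ?_
  obtain ⟨z, hz, rfl⟩ := Finset.mem_image.1 hC
  rw [pC, Finset.sum_mul]
  exact Finset.sum_congr rfl fun x hx => by rw [S.cls_congr m z x hx]

lemma pC_univ {X : Type*} [Fintype X] {q : X → ℝ} (hq : q ∈ simplex X) : pC q Finset.univ = 1 := hq.2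

lemma nonempty_of_simplex {X : Type*} [Fintype X] {q : X → ℝ} (hq : q ∈ simplex X) : Nonempty X := by
  by_contra h
  rw [not_nonempty_iff] at h
  simpa using hq.2

lemma le_pC {X : Type*} [Fintype X] {q : X → ℝ} (hq : q ∈ simplex X)
    {C : Finset X} {x : X} (hx : x ∈ C) :
    q x ≤ pC q C :=
  Finset.single_le_sum (f := q) (fun i _ => hq.1 i) hx

lemma mu_pos (S : SimStruct X) {μ : ℕ → ℝ}
    (hμ_mono : ∀ l : ℕ, 1 ≤ l → l < S.L → μ (l + 1) ≤ μ l) (hμ_pos : 0 < μ S.L)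
    {l : ℕ} (h1 : 1 ≤ l) (hl : l ≤ S.L) : 0 < μ l := by
  induction hl using Nat.decreasingInduction with
  | self => exact hμ_pos
  | of_succ k hk ih => exact (ih (by omega)).trans_le (hμ_mono k h1 hk)

/-! ### Scores and choice probabilities -/

lemma score_of_lt (S : SimStruct X) (μ : ℕ → ℝ) (y : X → ℝ) {l : ℕ} (hl : l < S.L)
    (C : Finset X) :
    score S μ y l C = μ (l + 1) * Real.log (∑ C' ∈ C.image (S.cls (l + 1)),
      Real.exp (score S μ y (l + 1) C' / μ (l + 1))) := by
  obtain ⟨k, hk⟩ : ∃ k, S.L = l + 1 + k := ⟨S.L - (l + 1), by omega⟩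
  have h1 : S.L - l = k + 1 := by omega
  have h2 : S.L - (l + 1) = k := by omega
  have h3 : S.L - k = l + 1 := by omega
  simp only [score, h1, h2, scoreAux, h3]

lemma score_leaf (S : SimStruct X) (μ : ℕ → ℝ) (y : X → ℝ) (x : X) :
    score S μ y S.L (S.cls S.L x) = y x := by
  simp [score, scoreAux, S.cls_L]

/-- The conditional choice probabilities of the children of a class sum to one. -/
lemma sum_children (S : SimStruct X) {μ : ℕ → ℝ} (y : X → ℝ) {l : ℕ} (hl : l < S.L)
    (hμ : 0 < μ (l + 1)) {D : Finset X} (hD : D.Nonempty) :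
    ∑ C ∈ D.image (S.cls (l + 1)),
      Real.exp ((score S μ y (l + 1) C - score S μ y l D) / μ (l + 1)) = 1 := by
  have hpos : 0 < ∑ C ∈ D.image (S.cls (l + 1)),
      Real.exp (score S μ y (l + 1) C / μ (l + 1)) :=
    Finset.sum_pos (fun _ _ => Real.exp_pos _) (hD.image _)
  have h : score S μ y l D / μ (l + 1) = Real.log (∑ C ∈ D.image (S.cls (l + 1)),
      Real.exp (score S μ y (l + 1) C / μ (l + 1))) := by
    rw [score_of_lt S μ y hl, mul_div_cancel_left₀ _ hμ.ne']
  simp only [sub_div, Real.exp_sub]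
  rw [← Finset.sum_div, h, Real.exp_log hpos, div_self hpos.ne']

/-- The mass given by the nested choice probabilities to the level-`l` class of `x` is the product
of the conditional choice probabilities along the chain from the root to that class. -/
lemma pC_condProb (S : SimStruct X) {μ : ℕ → ℝ}
    (hμ : ∀ l : ℕ, 1 ≤ l → l ≤ S.L → 0 < μ l) (y : X → ℝ) {l : ℕ} (hl : l ≤ S.L) (x : X) :
    pC (condProb S μ y 0) (S.cls l x) = ∏ l' ∈ Finset.range l,
      Real.exp ((score S μ y (l' + 1) (S.cls (l' + 1) x) - score S μ y l' (S.cls l' x))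
        / μ (l' + 1)) := by
  induction hl using Nat.decreasingInduction generalizing x with
  | self => simp [pC, S.cls_L, condProb]
  | of_succ k hk ih =>
    rw [pC, sum_cls_fiber S (Nat.le_succ k) hk]
    calc _ = ∑ C ∈ (S.cls k x).image (S.cls (k + 1)), (∏ l' ∈ Finset.range k,
            Real.exp ((score S μ y (l' + 1) (S.cls (l' + 1) x) - score S μ y l' (S.cls l' x))
              / μ (l' + 1))) *
            Real.exp ((score S μ y (k + 1) C - score S μ y k (S.cls k x)) / μ (k + 1)) := by
          refine Finset.sum_congr rfl fun C hC => ?_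
          obtain ⟨z, hz, rfl⟩ := Finset.mem_image.1 hC
          have h := ih z
          rw [pC] at h
          rw [h, Finset.prod_range_succ, S.cls_congr k x z hz]
          congr 1
          refine Finset.prod_congr rfl fun i hi => ?_
          rw [Finset.mem_range] at hi
          rw [cls_eq_of_mem S (show i + 1 ≤ k by omega) hk.le hz,
            cls_eq_of_mem S hi.le hk.le hz]
      _ = _ := by
          rw [← Finset.mul_sum, sum_children S y hk (hμ _ (by omega) hk) ⟨x, S.mem_cls k x⟩,
            mul_one]

lemma condProb_pos (S : SimStruct X) (μ : ℕ → ℝ) (y : X → ℝ) (x : X) :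
    0 < condProb S μ y 0 x :=
  Finset.prod_pos fun _ _ => Real.exp_pos _

lemma condProb_mem (S : SimStruct X) [Nonempty X] {μ : ℕ → ℝ}
    (hμ : ∀ l : ℕ, 1 ≤ l → l ≤ S.L → 0 < μ l) (y : X → ℝ) :
    condProb S μ y 0 ∈ simplex X := by
  refine ⟨fun x => (condProb_pos S μ y x).le, ?_⟩
  obtain ⟨x⟩ := ‹Nonempty X›
  have h := pC_condProb S hμ y (Nat.zero_le _) x
  rwa [S.cls_zero, Finset.range_zero, Finset.prod_empty] at h

/-! ### Fenchel coupling and nested entropy -/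

lemma abel_sum (μ a : ℕ → ℝ) (n : ℕ) :
    ∑ l ∈ Finset.Icc 1 n, (μ l - μ (l + 1)) * a l =
      ∑ l ∈ Finset.range n, μ (l + 1) * (a (l + 1) - a l) + μ 1 * a 0 - μ (n + 1) * a n := by
  induction n with
  | zero => simp
  | succ n ih =>
    rw [Finset.sum_Icc_succ_top (by omega), ih, Finset.sum_range_succ]
    ring

/-- The Fenchel coupling is a weighted sum over the levels of conditional relative entropies
of `q` with respect to the choice probabilities of `y`. -/
lemma fench_eq (S : SimStruct X) {μ : ℕ → ℝ}
    (hμ : ∀ l : ℕ, 1 ≤ l → l ≤ S.L → 0 < μ l) (hμ_last : μ (S.L + 1) = 0)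
    {q : X → ℝ} (hq : q ∈ simplex X) (y : X → ℝ) :
    fench S μ q y = ∑ l ∈ Finset.range S.L, μ (l + 1) * ∑ x, q x *
      (Real.log (pC q (S.cls (l + 1) x)) - Real.log (pC q (S.cls l x)) -
        (score S μ y (l + 1) (S.cls (l + 1) x) - score S μ y l (S.cls l x)) / μ (l + 1)) := by
  obtain ⟨w⟩ := nonempty_of_simplex hq
  have hent : nestEnt S μ q 0 Finset.univ = ∑ x, q x * ∑ l ∈ Finset.range S.L,
      μ (l + 1) * (Real.log (pC q (S.cls (l + 1) x)) - Real.log (pC q (S.cls l x))) := by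
    have h1 : ∀ x, ∑ l ∈ Finset.range S.L,
        μ (l + 1) * (Real.log (pC q (S.cls (l + 1) x)) - Real.log (pC q (S.cls l x))) =
        ∑ l ∈ Finset.Icc 1 S.L, (μ l - μ (l + 1)) * Real.log (pC q (S.cls l x)) := by
      intro x
      rw [abel_sum μ (fun l => Real.log (pC q (S.cls l x)))]
      simp [S.cls_zero, pC_univ hq, hμ_last]
    simp only [h1, Finset.mul_sum]
    rw [Finset.sum_comm]
    refine Finset.sum_congr (by simp) fun l hl => ?_
    have h2 := sum_mul_cls S (Nat.zero_le l) (Finset.mem_Icc.1 hl).2 w q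
      (fun C => Real.log (pC q C))
    rw [S.cls_zero] at h2
    simp only [xlogx]
    rw [← h2, Finset.mul_sum]
    exact Finset.sum_congr rfl fun x _ => by ring
  have hsc : score S μ y 0 Finset.univ - ∑ x, y x * q x = ∑ x, q x * ∑ l ∈ Finset.range S.L,
      (score S μ y l (S.cls l x) - score S μ y (l + 1) (S.cls (l + 1) x)) := by
    have h1 : ∀ x, ∑ l ∈ Finset.range S.L,
        (score S μ y l (S.cls l x) - score S μ y (l + 1) (S.cls (l + 1) x)) =
        score S μ y 0 Finset.univ - y x := by
      intro x
      rw [Finset.sum_range_sub' (fun l => score S μ y l (S.cls l x)), score_leaf, S.cls_zero]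
    simp only [h1, mul_sub, Finset.sum_sub_distrib]
    rw [← Finset.sum_mul, hq.2, one_mul]
    simp only [mul_comm]
  rw [fench, add_sub_assoc, hent, hsc, ← Finset.sum_add_distrib]
  simp only [← mul_add, ← Finset.sum_add_distrib]
  simp only [Finset.mul_sum]
  rw [Finset.sum_comm]
  refine Finset.sum_congr rfl fun l hl => Finset.sum_congr rfl fun x _ => ?_
  have := (hμ (l + 1) (by omega) (Finset.mem_range.1 hl)).ne'
  field_simp
  ring

/-- Gibbs' inequality for the conditional distributions of level `l + 1` given level `l`. -/
lemma gibbs_level (S : SimStruct X) {μ : ℕ → ℝ} {q : X → ℝ} (hq : q ∈ simplex X) (y : X → ℝ)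
    {l : ℕ} (hl : l < S.L) (hμ : 0 < μ (l + 1)) :
    0 ≤ ∑ x, q x *
      (Real.log (pC q (S.cls (l + 1) x)) - Real.log (pC q (S.cls l x)) -
        (score S μ y (l + 1) (S.cls (l + 1) x) - score S μ y l (S.cls l x)) / μ (l + 1)) := by
  obtain ⟨w⟩ := nonempty_of_simplex hq
  set r : X → ℝ := fun x => Real.exp
    ((score S μ y (l + 1) (S.cls (l + 1) x) - score S μ y l (S.cls l x)) / μ (l + 1)) with hr
  -- By `log t ≤ t - 1`, each term is at least `q x - q x * r x * q_l(x) / q_{l+1}(x)`.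
  have hpt : ∀ x, q x - q x * (r x * pC q (S.cls l x) / pC q (S.cls (l + 1) x)) ≤ q x *
      (Real.log (pC q (S.cls (l + 1) x)) - Real.log (pC q (S.cls l x)) -
        (score S μ y (l + 1) (S.cls (l + 1) x) - score S μ y l (S.cls l x)) / μ (l + 1)) := by
    intro x
    rcases (hq.1 x).eq_or_lt with h0 | h0
    · simp [← h0]
    have ha : 0 < pC q (S.cls l x) := h0.trans_le (le_pC hq (S.mem_cls _ _))
    have hb : 0 < pC q (S.cls (l + 1) x) := h0.trans_le (le_pC hq (S.mem_cls _ _))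
    have hrx : 0 < r x := Real.exp_pos _
    have h1 := Real.log_le_sub_one_of_pos (div_pos (mul_pos hrx ha) hb)
    rw [Real.log_div (mul_pos hrx ha).ne' hb.ne', Real.log_mul hrx.ne' ha.ne', hr,
      Real.log_exp] at h1
    have h2 := mul_le_mul_of_nonneg_left h1 h0.le
    simp only [hr]
    linarith
  have hsum : ∑ x, q x * (r x * pC q (S.cls l x) / pC q (S.cls (l + 1) x)) ≤ 1 := by
    have e := sum_cls_fiber S (Nat.zero_le l) hl.le w
    rw [S.cls_zero] at e
    have e2 : ∑ C ∈ Finset.univ.image (S.cls l), pC q C = 1 := by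
      rw [← hq.2, e]; rfl
    rw [e, ← e2]
    refine Finset.sum_le_sum fun D hD => ?_
    obtain ⟨z, -, rfl⟩ := Finset.mem_image.1 hD
    have h1 : ∑ x ∈ S.cls l z, q x * (r x * pC q (S.cls l x) / pC q (S.cls (l + 1) x)) =
        ∑ x ∈ S.cls l z, q x * ((fun C => Real.exp
          ((score S μ y (l + 1) C - score S μ y l (S.cls l z)) / μ (l + 1)) *
            pC q (S.cls l z) / pC q C) (S.cls (l + 1) x)) :=
      Finset.sum_congr rfl fun x hx => by simp only [hr, S.cls_congr l z x hx]
    rw [h1.trans (sum_mul_cls S (m := l + 1) (Nat.le_succ l) hl z q fun C => Real.exp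
      ((score S μ y (l + 1) C - score S μ y l (S.cls l z)) / μ (l + 1)) *
        pC q (S.cls l z) / pC q C)]
    calc _ ≤ ∑ C ∈ (S.cls l z).image (S.cls (l + 1)), Real.exp
          ((score S μ y (l + 1) C - score S μ y l (S.cls l z)) / μ (l + 1)) *
            pC q (S.cls l z) := by
          refine Finset.sum_le_sum fun C _ => ?_
          have hnn : ∀ C, 0 ≤ pC q C := fun C => Finset.sum_nonneg fun i _ => hq.1 i
          rcases (hnn C).eq_or_lt with h0 | h0
          · rw [← h0, zero_mul]
            exact mul_nonneg (Real.exp_pos _).le (hnn _)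
          · rw [mul_div_cancel₀ _ h0.ne']
      _ = _ := by
          rw [← Finset.sum_mul, sum_children S y hl hμ ⟨z, S.mem_cls l z⟩, one_mul]
  have h := Finset.sum_le_sum fun x (_ : x ∈ Finset.univ) => hpt x
  rw [Finset.sum_sub_distrib, hq.2] at h
  linarith

lemma fench_nonneg (S : SimStruct X) {μ : ℕ → ℝ}
    (hμ : ∀ l : ℕ, 1 ≤ l → l ≤ S.L → 0 < μ l) (hμ_last : μ (S.L + 1) = 0)
    {q : X → ℝ} (hq : q ∈ simplex X) (y : X → ℝ) : 0 ≤ fench S μ q y := by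
  rw [fench_eq S hμ hμ_last hq]
  refine Finset.sum_nonneg fun l hl => ?_
  have hl := Finset.mem_range.1 hl
  have h := hμ (l + 1) (by omega) hl
  exact mul_nonneg h.le (gibbs_level S hq y hl h)

lemma fench_condProb (S : SimStruct X) [Nonempty X] {μ : ℕ → ℝ}
    (hμ : ∀ l : ℕ, 1 ≤ l → l ≤ S.L → 0 < μ l) (hμ_last : μ (S.L + 1) = 0) (y : X → ℝ) :
    fench S μ (condProb S μ y 0) y = 0 := by
  rw [fench_eq S hμ hμ_last (condProb_mem S hμ y)]
  refine Finset.sum_eq_zero fun l hl => ?_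
  have hl := Finset.mem_range.1 hl
  refine mul_eq_zero_of_right _ (Finset.sum_eq_zero fun x _ => mul_eq_zero_of_right _ ?_)
  rw [pC_condProb S hμ y hl.le, pC_condProb S hμ y (Nat.succ_le_of_lt hl),
    Finset.prod_range_succ, Real.log_mul (Finset.prod_pos fun _ _ => Real.exp_pos _).ne'
      (Real.exp_pos _).ne', Real.log_exp]
  ring

lemma nestEnt_nonpos (S : SimStruct X) {μ : ℕ → ℝ}
    (hμ_mono : ∀ l : ℕ, 1 ≤ l → l < S.L → μ (l + 1) ≤ μ l)
    (hμ_pos : 0 < μ S.L) (hμ_last : μ (S.L + 1) = 0)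
    {q : X → ℝ} (hq : q ∈ simplex X) : nestEnt S μ q 0 Finset.univ ≤ 0 := by
  refine Finset.sum_nonpos fun l hl => mul_nonpos_of_nonneg_of_nonpos ?_ ?_
  · have hl := Finset.mem_Icc.1 hl
    rcases hl.2.eq_or_lt with h | h
    · rw [h, hμ_last]; linarith
    · linarith [hμ_mono l (by omega) h]
  · refine Finset.sum_nonpos fun C _ => ?_
    have h0 : 0 ≤ pC q C := Finset.sum_nonneg fun i _ => hq.1 i
    have h1 : pC q C ≤ 1 := by
      rw [← hq.2]
      exact Finset.sum_le_sum_of_subset_of_nonneg (Finset.subset_univ C) fun i _ _ => hq.1 i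
    exact mul_nonpos_of_nonneg_of_nonpos h0 (Real.log_nonpos h0 h1)

lemma fench_smul (S : SimStruct X) (μ : ℕ → ℝ) (p y : X → ℝ) (s : ℝ) :
    fench S μ p (fun x => s * y x) = nestEnt S μ p 0 Finset.univ +
      score S μ (fun x => s * y x) 0 Finset.univ - s * ∑ x, y x * p x := by
  simp only [fench, Finset.mul_sum, mul_assoc]

/-- Monotonicity of `s ↦ (Φ(s y) - H) / s`: the maximizer for the parameter `s` is a competitor for
`s'`, and its entropy is at least `-H`. -/
lemma score_div_mono (S : SimStruct X) [Nonempty X] {μ : ℕ → ℝ}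
    (hμ : ∀ l : ℕ, 1 ≤ l → l ≤ S.L → 0 < μ l) (hμ_last : μ (S.L + 1) = 0) (y : X → ℝ)
    {s s' : ℝ} (hs : 0 < s) (hss : s ≤ s') :
    (score S μ (fun x => s * y x) 0 Finset.univ - score S μ 0 0 Finset.univ) / s ≤
      (score S μ (fun x => s' * y x) 0 Finset.univ - score S μ 0 0 Finset.univ) / s' := by
  have hp := condProb_mem S hμ (fun x => s * y x)
  have h1 := fench_condProb S hμ hμ_last (fun x => s * y x)
  have h2 := fench_nonneg S hμ hμ_last hp (fun x => s' * y x)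
  have h3 := fench_nonneg S hμ hμ_last hp 0
  rw [fench_smul] at h1 h2
  simp only [fench, Pi.zero_apply, zero_mul, Finset.sum_const_zero, sub_zero] at h3
  rw [div_le_div_iff₀ hs (hs.trans_le hss)]
  generalize ∑ x, y x * condProb S μ (fun x => s * y x) 0 x = a at *
  generalize nestEnt S μ (condProb S μ (fun x => s * y x) 0) 0 Finset.univ = b at *
  have h4 := mul_nonneg hs.le h2
  have h5 := mul_nonneg (sub_nonneg.2 hss) h3
  have h6 : score S μ (fun x => s * y x) 0 Finset.univ = s * a - b := by linarith
  rw [h6]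
  nlinarith

/-! ### Regret bound -/

theorem stmt15 (S : SimStruct X) (μ : ℕ → ℝ)
    (hμ_mono : ∀ l : ℕ, 1 ≤ l → l < S.L → μ (l + 1) ≤ μ l)
    (hμ_pos : 0 < μ S.L) (hμ_last : μ (S.L + 1) = 0)
    (T : ℕ) (η : ℕ → ℝ) (hη_dec : ∀ t ∈ Finset.Icc 1 T, η (t + 1) ≤ η t)
    (hη_pos : 0 < η (T + 1)) (v y : ℕ → X → ℝ) (hy1 : y 1 = 0)
    (hy_rec : ∀ t ∈ Finset.Icc 1 T, y (t + 1) = y t - v t)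
    (q : X → ℝ) (hq : q ∈ simplex X) :
    ∑ t ∈ Finset.Icc 1 T, ∑ x, v t x *
        (condProb S μ (fun x' => η t * y t x') 0 x - q x) ≤
      score S μ 0 0 Finset.univ / η (T + 1) +
        ∑ t ∈ Finset.Icc 1 T,
          (1 / η t) * fench S μ (fun x => condProb S μ (fun x' => η t * y t x') 0 x)
            (fun x => η t * y (t + 1) x) := by
  have hμ : ∀ l : ℕ, 1 ≤ l → l ≤ S.L → 0 < μ l := fun l => mu_pos S hμ_mono hμ_pos
  have := nonempty_of_simplex hq
  have hη : ∀ t, 1 ≤ t → t ≤ T + 1 → 0 < η t := by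
    intro t h1 ht
    induction ht using Nat.decreasingInduction with
    | self => exact hη_pos
    | of_succ k hk ih =>
      exact (ih (by omega)).trans_le (hη_dec k (Finset.mem_Icc.2 ⟨h1, by omega⟩))
  have hkey : ∀ n, n ≤ T →
      (score S μ (fun x => η (n + 1) * y (n + 1) x) 0 Finset.univ - score S μ 0 0 Finset.univ) /
          η (n + 1) + ∑ t ∈ Finset.Icc 1 n, ∑ x, v t x *
            condProb S μ (fun x' => η t * y t x') 0 x ≤
        ∑ t ∈ Finset.Icc 1 n,
          (1 / η t) * fench S μ (fun x => condProb S μ (fun x' => η t * y t x') 0 x)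
            (fun x => η t * y (t + 1) x) := by
    intro n
    induction n with
    | zero =>
      intro _
      have h0 : (fun x => η (0 + 1) * y (0 + 1) x) = (0 : X → ℝ) := by
        funext x; simp [hy1]
      rw [h0]
      simp
    | succ n ih =>
      intro hn
      have ih := ih (by omega)
      rw [Finset.sum_Icc_succ_top (by omega), Finset.sum_Icc_succ_top (by omega)]
      have hmem : n + 1 ∈ Finset.Icc 1 T := Finset.mem_Icc.2 ⟨by omega, hn⟩
      have hpos := hη (n + 1) (by omega) (by omega)
      have hmono := score_div_mono S hμ hμ_last (y (n + 1 + 1))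
        (hη (n + 1 + 1) (by omega) (by omega)) (hη_dec _ hmem)
      have h1 := fench_condProb S hμ hμ_last (fun x' => η (n + 1) * y (n + 1) x')
      rw [fench_smul] at h1
      have hv : ∑ x, v (n + 1) x * condProb S μ (fun x' => η (n + 1) * y (n + 1) x') 0 x =
          ∑ x, y (n + 1) x * condProb S μ (fun x' => η (n + 1) * y (n + 1) x') 0 x -
          ∑ x, y (n + 1 + 1) x * condProb S μ (fun x' => η (n + 1) * y (n + 1) x') 0 x := by
        rw [← Finset.sum_sub_distrib, hy_rec _ hmem]
        exact Finset.sum_congr rfl fun x _ => by simp only [Pi.sub_apply]; ring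
      have hF : (1 / η (n + 1)) * fench S μ
            (fun x => condProb S μ (fun x' => η (n + 1) * y (n + 1) x') 0 x)
            (fun x => η (n + 1) * y (n + 1 + 1) x) =
          ∑ x, v (n + 1) x * condProb S μ (fun x' => η (n + 1) * y (n + 1) x') 0 x +
          ((score S μ (fun x => η (n + 1) * y (n + 1 + 1) x) 0 Finset.univ -
              score S μ 0 0 Finset.univ) / η (n + 1) -
            (score S μ (fun x => η (n + 1) * y (n + 1) x) 0 Finset.univ -
              score S μ 0 0 Finset.univ) / η (n + 1)) := by
        rw [fench_smul, hv]
        have hne := hpos.ne'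
        field_simp
        linarith
      rw [hF]
      linarith
  have hyn : ∀ n, n ≤ T → ∑ t ∈ Finset.Icc 1 n, ∑ x, v t x * q x = -∑ x, y (n + 1) x * q x := by
    intro n
    induction n with
    | zero => intro _; simp [hy1]
    | succ n ih =>
      intro hn
      rw [Finset.sum_Icc_succ_top (by omega), ih (by omega),
        hy_rec (n + 1) (Finset.mem_Icc.2 ⟨by omega, hn⟩)]
      simp only [Pi.sub_apply, sub_mul, Finset.sum_sub_distrib]
      ring
  have hlast : ∑ x, y (T + 1) x * q x ≤
      score S μ (fun x => η (T + 1) * y (T + 1) x) 0 Finset.univ / η (T + 1) := by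
    have h1 := fench_nonneg S hμ hμ_last hq (fun x => η (T + 1) * y (T + 1) x)
    have h2 := nestEnt_nonpos S hμ_mono hμ_pos hμ_last hq
    rw [fench_smul] at h1
    rw [le_div_iff₀ hη_pos]
    linarith
  have hk := hkey T le_rfl
  have hy := hyn T le_rfl
  rw [sub_div] at hk
  simp only [mul_sub, Finset.sum_sub_distrib]
  linarith


end NestedBandits
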